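/- arXiv:1204.6650 — 2 statements merged into one kernel-verified Lean document; each statement's English description precedes it below -/
import Mathlib

section
/- Let X be a random variable whose characteristic function f has a continuous derivative for t > 0 and satisfies ∫ t²(|f(t)|² + |f'(t)|²) dt < ∞. Then X has an absolutely continuous distribution with density p of bounded variation and ‖p‖_TV ≤ (∫ |t f(t)|² dt · ∫ |(t f(t))'|² dt)^{1/4}. -/
open MeasureTheory Real ProbabilityTheory

open scoped ENNReal

/-! Since `f` is continuous and `t f(t)` is square integrable, so is `f`. By Carlson's inequality
`‖g‖₁² ≤ 2π ‖g‖₂ ‖t g‖₂`, `f` is then integrable, and Fourier inversion yields the density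
`p(x) = (2π)⁻¹ ∫ e^{-itx} f(t) dt`. Up to constants, `p'` is the Fourier transform of `t f(t)` and
`x p'(x)` that of `(t f(t))'`, so Carlson's inequality on the Fourier side and Plancherel bound the
`L¹` norm of `p'`, that is, the total variation of `p`. -/

open Filter Set

open scoped FourierTransform InnerProductSpace SchwartzMap ComplexConjugate

section CharFun

variable {E : Type*} [NormedAddCommGroup E] [InnerProductSpace ℝ E] [MeasurableSpace E]
  {μ ν : Measure E}

lemma charFun_withDensity_ofReal {r : E → ℝ} (hr : AEMeasurable r ν) (t : E) :
    charFun (ν.withDensity fun x ↦ ENNReal.ofReal (r x)) t =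
      ∫ x, Complex.exp (⟪x, t⟫_ℝ * Complex.I) * (max (r x) 0 : ℝ) ∂ν := by
  rw [charFun_apply, integral_withDensity_eq_integral_toReal_smul₀ hr.ennreal_ofReal
    (Eventually.of_forall fun _ ↦ ENNReal.ofReal_lt_top)]
  simp only [ENNReal.toReal_ofReal', Complex.real_smul, mul_comm]

variable [BorelSpace E]

lemma integrable_cexp_inner_mul {q : E → ℂ} (hq : Integrable q ν) (t : E) :
    Integrable (fun x ↦ Complex.exp (⟪x, t⟫_ℝ * Complex.I) * q x) ν :=
  hq.bdd_mul (c := 1) (Continuous.aestronglyMeasurable (by fun_prop))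
    (Eventually.of_forall fun x ↦ (Complex.norm_exp_ofReal_mul_I _).le)

lemma charFun_add_measure [IsFiniteMeasure μ] [IsFiniteMeasure ν] (t : E) :
    charFun (μ + ν) t = charFun μ t + charFun ν t := by
  have hint (ρ : Measure E) [IsFiniteMeasure ρ] :
      Integrable (fun x ↦ Complex.exp (⟪x, t⟫_ℝ * Complex.I)) ρ := by
    simpa only [mul_one] using integrable_cexp_inner_mul (integrable_const (1 : ℂ)) t
  exact integral_add_measure (hint μ) (hint ν)

variable [CompleteSpace E] [SecondCountableTopology E]

theorem eq_withDensity_of_charFun_eq_integral_ofReal [IsFiniteMeasure μ] {r : E → ℝ}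
    (hr : Integrable r ν)
    (h : ∀ t, charFun μ t = ∫ x, Complex.exp (⟪x, t⟫_ℝ * Complex.I) * (r x : ℂ) ∂ν) :
    μ = ν.withDensity fun x ↦ ENNReal.ofReal (r x) := by
  wlog hrm : Measurable r generalizing r
  · have hrm := hr.aestronglyMeasurable
    have hae : hrm.mk r =ᵐ[ν] r := hrm.ae_eq_mk.symm
    rw [this (hr.congr hae.symm) (fun t ↦ ?_) hrm.stronglyMeasurable_mk.measurable]
    · exact withDensity_congr_ae (hae.mono fun x hx ↦ by simp only [hx])
    · exact (h t).trans (integral_congr_ae (hae.mono fun x hx ↦ by simp only [hx]))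
  set νpos := ν.withDensity fun x ↦ ENNReal.ofReal (r x)
  set νneg := ν.withDensity fun x ↦ ENNReal.ofReal (-r x)
  have : IsFiniteMeasure νpos := isFiniteMeasure_withDensity_ofReal hr.2
  have : IsFiniteMeasure νneg := isFiniteMeasure_withDensity_ofReal hr.neg.2
  have hneg : Integrable (fun x ↦ max (-r x) 0) ν := hr.neg.pos_part
  have hadd : μ + νneg = νpos := by
    refine Measure.ext_of_charFun (funext fun t ↦ ?_)
    rw [charFun_add_measure, h, charFun_withDensity_ofReal hrm.aemeasurable,
      charFun_withDensity_ofReal (r := fun x ↦ -r x) hrm.neg.aemeasurable,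
      ← integral_add (integrable_cexp_inner_mul (q := fun x ↦ (r x : ℂ)) hr.ofReal t)
        (integrable_cexp_inner_mul (q := fun x ↦ ((max (-r x) 0 : ℝ) : ℂ)) hneg.ofReal t)]
    simp only [← mul_add, ← Complex.ofReal_add, add_max, add_neg_cancel, add_zero,
      max_comm (0 : ℝ)]
  have hle : νneg ≤ νpos := hadd ▸ Measure.le_add_left le_rfl
  have hzero : νneg = 0 :=
    Measure.eq_zero_of_absolutelyContinuous_of_mutuallySingular
      (Measure.absolutelyContinuous_of_le hle)
      (withDensity_ofReal_mutuallySingular hrm).symm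
  rw [← hadd, hzero, add_zero]

theorem eq_withDensity_of_charFun_eq_integral [IsFiniteMeasure μ] {q : E → ℂ}
    (hq : Integrable q ν)
    (h : ∀ t, charFun μ t = ∫ x, Complex.exp (⟪x, t⟫_ℝ * Complex.I) * q x ∂ν) :
    μ = ν.withDensity fun x ↦ ENNReal.ofReal (q x).re := by
  refine eq_withDensity_of_charFun_eq_integral_ofReal hq.re fun t ↦ ?_
  have hconj : charFun μ t = ∫ x, Complex.exp (⟪x, t⟫_ℝ * Complex.I) * conj (q x) ∂ν := by
    rw [← neg_neg t, charFun_neg, h, ← integral_conj]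
    simp only [map_mul, ← Complex.exp_conj, inner_neg_right, Complex.conj_ofReal, Complex.conj_I,
      Complex.ofReal_neg, map_neg, neg_mul, mul_neg, neg_neg]
  have hqc : Integrable (fun x ↦ conj (q x)) ν := Complex.conjLIE.integrable_comp_iff.2 hq
  calc charFun μ t = (charFun μ t + charFun μ t) / 2 := by ring
    _ = ∫ x, (Complex.exp (⟪x, t⟫_ℝ * Complex.I) * q x +
          Complex.exp (⟪x, t⟫_ℝ * Complex.I) * conj (q x)) / 2 ∂ν := by
      rw [integral_div, integral_add (integrable_cexp_inner_mul hq t)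
        (integrable_cexp_inner_mul hqc t), ← h, ← hconj]
    _ = ∫ x, Complex.exp (⟪x, t⟫_ℝ * Complex.I) * ((q x).re : ℂ) ∂ν := by
      simp only [Complex.re_eq_add_conj, ← mul_add, mul_div_assoc]

end CharFun

section FourierInversion

lemma eq_of_withDensity_eq {α : Type*} [MeasurableSpace α] {μ ν : Measure α} {f : α → ℝ≥0∞}
    (hf : Measurable f) (hf₀ : ∀ x, f x ≠ 0) (hf_top : ∀ x, f x ≠ ∞)
    (h : μ.withDensity f = ν.withDensity f) : μ = ν := by
  rw [← withDensity_inv_same (μ := μ) hf (ae_of_all _ hf₀) (ae_of_all _ hf_top), h,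
    withDensity_inv_same hf (ae_of_all _ hf₀) (ae_of_all _ hf_top)]

variable {V : Type*} [NormedAddCommGroup V] [InnerProductSpace ℝ V] [FiniteDimensional ℝ V]
  [MeasurableSpace V] [BorelSpace V] {μ : Measure V} [IsFiniteMeasure μ]

lemma integral_fourier_eq_integral_charFun_mul {φ : V → ℂ} (hφ : Integrable φ) :
    ∫ x, 𝓕 φ x ∂μ = ∫ w, charFun μ (-(2 * π) • w) * φ w := by
  have hcharFun (w : V) : VectorFourier.fourierIntegral 𝐞 μ (innerₗ V) 1 w =
      charFun μ (-(2 * π) • w) := by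
    rw [charFun_eq_fourierIntegral', smul_smul, neg_mul_neg, inv_mul_cancel₀ two_pi_pos.ne',
      one_smul]
  have hone : Integrable (1 : V → ℂ) μ := integrable_const 1
  simpa [hcharFun] using! (VectorFourier.integral_fourierIntegral_smul_eq_flip (L := innerₗ V)
    continuous_fourierChar (by exact continuous_inner) hone hφ).symm

lemma integral_eq_integral_mul_fourier_charFun {φ : V → ℂ} (hφc : Continuous φ)
    (hφ : Integrable φ) (hφF : Integrable (𝓕 φ))
    (hμ : Integrable fun w ↦ charFun μ ((2 * π) • w)) :
    ∫ x, φ x ∂μ = ∫ x, φ x * 𝓕 (fun w ↦ charFun μ ((2 * π) • w)) x := by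
  have hφF' : Integrable (𝓕⁻ φ) :=
    hφF.comp_neg.congr (ae_of_all _ fun w ↦ (fourierInv_eq_fourier_neg φ w).symm)
  calc ∫ x, φ x ∂μ = ∫ x, 𝓕 (𝓕⁻ φ) x ∂μ := by
        rw [hφc.fourier_fourierInv_eq hφ hφF]
    _ = ∫ w, charFun μ (-(2 * π) • w) * 𝓕 φ (-w) := by
        rw [integral_fourier_eq_integral_charFun_mul hφF']
        simp only [fourierInv_eq_fourier_neg]
    _ = ∫ w, 𝓕 φ w * charFun μ ((2 * π) • w) := by
        rw [← integral_neg_eq_self]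
        simp only [smul_neg, neg_smul, neg_neg, mul_comm]
    _ = ∫ x, φ x * 𝓕 (fun w ↦ charFun μ ((2 * π) • w)) x := by
        simpa using! (VectorFourier.integral_fourierIntegral_smul_eq_flip (L := innerₗ V)
          continuous_fourierChar (by exact continuous_inner) hφ hμ)

lemma integrable_fourier_gaussian {b : ℂ} (hb : 0 < b.re) (x : V) :
    Integrable (𝓕 fun v : V ↦ Complex.exp (-b * ‖v‖ ^ 2 + 2 * π * Complex.I * ⟪x, v⟫_ℝ)) := by
  have hb' : 0 < (π ^ 2 / b).re := by
    have hb₀ : b ≠ 0 := by rintro rfl; exact hb.false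
    rw [div_eq_mul_inv, ← Complex.ofReal_pow, Complex.re_ofReal_mul, Complex.inv_re]
    exact mul_pos (by positivity) (div_pos hb (Complex.normSq_pos.2 hb₀))
  have hgauss := (GaussianFourier.integrable_cexp_neg_mul_sq_norm_add hb' 0 (0 : V)).comp_sub_left x
  refine (hgauss.const_mul ((π / b) ^ (Module.finrank ℝ V / 2 : ℂ))).congr (ae_of_all _ fun w ↦ ?_)
  rw [fourier_gaussian_innerProductSpace' hb x w]
  simp only [zero_mul, add_zero, neg_mul, neg_div, div_mul_eq_mul_div]

lemma integral_cexp_mul_gaussian_eq (hμ : Integrable fun w ↦ charFun μ ((2 * π) • w)) (t : V) :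
    ∫ x, Complex.exp (⟪x, t⟫_ℝ * Complex.I) * Real.exp (-‖x‖ ^ 2) ∂μ =
      ∫ x, Complex.exp (⟪x, t⟫_ℝ * Complex.I) *
        (Real.exp (-‖x‖ ^ 2) * 𝓕 (fun w ↦ charFun μ ((2 * π) • w)) x) := by
  have hb : 0 < (1 : ℂ).re := one_pos
  have hwave (x : V) : Complex.exp (⟪x, t⟫_ℝ * Complex.I) * Real.exp (-‖x‖ ^ 2) =
      Complex.exp (-1 * ‖x‖ ^ 2 + 2 * π * Complex.I * ⟪(2 * π)⁻¹ • t, x⟫_ℝ) := by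
    rw [Complex.ofReal_exp, ← Complex.exp_add, real_inner_smul_left, real_inner_comm]
    have : (π : ℂ) ≠ 0 := Complex.ofReal_ne_zero.2 pi_ne_zero
    congr 1
    push_cast
    field_simp
    ring
  simp_rw [← mul_assoc, hwave]
  exact integral_eq_integral_mul_fourier_charFun (by fun_prop)
    (GaussianFourier.integrable_cexp_neg_mul_sq_norm_add hb _ _)
    (integrable_fourier_gaussian hb _) hμ

theorem eq_withDensity_fourier_charFun (hμ : Integrable fun w ↦ charFun μ ((2 * π) • w)) :
    μ = volume.withDensity
      fun x ↦ ENNReal.ofReal (𝓕 (fun w ↦ charFun μ ((2 * π) • w)) x).re := by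
  set q := 𝓕 (fun w ↦ charFun μ ((2 * π) • w))
  have hqc : Continuous q :=
    VectorFourier.fourierIntegral_continuous continuous_fourierChar (innerSL ℝ).continuous₂ hμ
  -- Weighting with a Gaussian makes the candidate density integrable.
  set γ : V → ℝ := fun x ↦ Real.exp (-‖x‖ ^ 2)
  have hγ : Integrable fun x ↦ (γ x : ℂ) := by
    simpa [γ] using GaussianFourier.integrable_cexp_neg_mul_sq_norm_add (b := 1) one_pos 0 (0 : V)
  have hγq : Integrable fun x ↦ (γ x : ℂ) * q x :=
    hγ.mul_bdd hqc.aestronglyMeasurable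
      (ae_of_all _ fun x ↦ VectorFourier.norm_fourierIntegral_le_integral_norm _ _ _ _ x)
  have hγm : Measurable γ := by fun_prop
  have hγμ : Integrable γ μ :=
    (integrable_const (1 : ℝ)).mono' hγm.aestronglyMeasurable
      (ae_of_all _ fun x ↦ by simp [γ])
  have : IsFiniteMeasure (μ.withDensity fun x ↦ ENNReal.ofReal (γ x)) :=
    isFiniteMeasure_withDensity_ofReal hγμ.2
  have hweighted : μ.withDensity (fun x ↦ ENNReal.ofReal (γ x)) =
      volume.withDensity fun x ↦ ENNReal.ofReal (γ x * q x).re := by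
    refine eq_withDensity_of_charFun_eq_integral hγq fun t ↦ ?_
    rw [charFun_withDensity_ofReal hγm.aemeasurable, ← integral_cexp_mul_gaussian_eq hμ t]
    simp only [γ, max_eq_left (Real.exp_pos _).le]
  refine eq_of_withDensity_eq hγm.ennreal_ofReal
    (fun x ↦ (ENNReal.ofReal_pos.2 (Real.exp_pos _)).ne') (fun _ ↦ ENNReal.ofReal_ne_top) ?_
  rw [hweighted, ← withDensity_mul _ (by fun_prop) hγm.ennreal_ofReal]
  congr with x
  rw [Pi.mul_apply, Complex.re_ofReal_mul, ENNReal.ofReal_mul (Real.exp_pos _).le, mul_comm]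

end FourierInversion

section FourierL2

open scoped LineDeriv

variable {V F : Type*} [NormedAddCommGroup V] [InnerProductSpace ℝ V] [FiniteDimensional ℝ V]
  [MeasurableSpace V] [BorelSpace V] [NormedAddCommGroup F]

lemma ae_eq_of_forall_integral_schwartz_smul_eq [NormedSpace ℂ F] [CompleteSpace F] {f g : V → F}
    (hf : LocallyIntegrable f) (hg : LocallyIntegrable g)
    (h : ∀ φ : 𝓢(V, ℂ), ∫ x, φ x • f x = ∫ x, φ x • g x) : f =ᵐ[volume] g := by
  refine ae_eq_of_integral_contDiff_smul_eq hf hg fun η hη hηc ↦ ?_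
  have hη' : ContDiff ℝ (⊤ : ℕ∞) (Complex.ofRealCLM ∘ η) := by fun_prop
  have hηc' : HasCompactSupport (Complex.ofRealCLM ∘ η) := hηc.comp_left rfl
  simpa using h (hηc'.toSchwartzMap hη')

variable [InnerProductSpace ℂ F] [CompleteSpace F]

lemma fourierInv_toLp_ae_eq {g : V → F} (hg : Integrable g) (hg2 : MemLp g 2) :
    (𝓕⁻ (hg2.toLp g) : Lp F 2 (volume : Measure V)) =ᵐ[volume] 𝓕⁻ g := by
  have hc : Continuous (𝓕⁻ g) :=
    VectorFourier.fourierIntegral_continuous continuous_fourierChar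
      (L := -innerₗ V) (by exact continuous_inner.neg) hg
  refine ae_eq_of_forall_integral_schwartz_smul_eq
    ((Lp.memLp _).locallyIntegrable one_le_two) hc.locallyIntegrable fun φ ↦ ?_
  calc ∫ x, φ x • (𝓕⁻ (hg2.toLp g) : Lp F 2 (volume : Measure V)) x
      = ∫ x, (𝓕⁻ φ) x • hg2.toLp g x := by
        simpa using
          (DFunLike.congr_fun (Lp.fourierInv_toTemperedDistribution_eq (hg2.toLp g)) φ).symm
    _ = ∫ x, 𝓕⁻ (φ : V → ℂ) x • g x := by
        rw [← SchwartzMap.fourierInv_coe]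
        exact integral_congr_ae (hg2.coeFn_toLp.mono fun x hx ↦ by simp only [hx])
    _ = ∫ x, φ x • 𝓕⁻ g x := by
        have hflip : (-innerₗ V).flip = -innerₗ V := by ext; simp [real_inner_comm]
        simpa only [hflip] using! VectorFourier.integral_fourierIntegral_smul_eq_flip
          (L := -innerₗ V) continuous_fourierChar (by exact continuous_inner.neg)
          (φ.integrable (μ := volume)) hg

lemma conj_fourierInv (g : V → ℂ) (w : V) : conj (𝓕⁻ g w) = 𝓕 (fun x ↦ conj (g x)) w := by
  rw [fourierInv_eq', fourier_eq', ← integral_conj]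
  simp only [smul_eq_mul, map_mul, ← Complex.exp_conj, Complex.conj_ofReal, Complex.conj_I,
    mul_neg, neg_mul, Complex.ofReal_neg]

lemma setIntegral_fourier_toLp {u : V → ℂ} (hu : MemLp u 2) {s : Set V} (hs : MeasurableSet s)
    (hs_fin : volume s ≠ ∞) :
    ∫ x in s, (𝓕 (hu.toLp u) : Lp ℂ 2 (volume : Measure V)) x =
      ∫ w, 𝓕 (s.indicator fun _ ↦ (1 : ℂ)) w * u w := by
  have hone : MemLp (s.indicator fun _ ↦ (1 : ℂ)) 2 := memLp_indicator_const 2 hs 1 (.inr hs_fin)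
  have hone₁ : Integrable (s.indicator fun _ ↦ (1 : ℂ)) :=
    (integrable_indicator_iff hs).2 (integrableOn_const hs_fin)
  have hconj : (fun x ↦ conj (s.indicator (fun _ ↦ (1 : ℂ)) x)) = s.indicator fun _ ↦ 1 := by
    ext x
    by_cases hx : x ∈ s <;> simp [hx]
  set χ : Lp ℂ 2 (volume : Measure V) := indicatorConstLp 2 hs hs_fin 1
  calc ∫ x in s, (𝓕 (hu.toLp u) : Lp ℂ 2 (volume : Measure V)) x
      = ⟪𝓕 (𝓕⁻ χ), 𝓕 (hu.toLp u)⟫_ℂ := by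
        rw [← L2.inner_indicatorConstLp_one hs hs_fin, FourierTransform.fourier_fourierInv_eq]
    _ = ∫ w, ⟪(𝓕⁻ χ : Lp ℂ 2 (volume : Measure V)) w, hu.toLp u w⟫_ℂ := by
        rw [Lp.inner_fourier_eq, L2.inner_def]
    _ = ∫ w, 𝓕 (s.indicator fun _ ↦ (1 : ℂ)) w * u w := by
        refine integral_congr_ae ?_
        filter_upwards [hu.coeFn_toLp, fourierInv_toLp_ae_eq hone₁ hone] with w hw hw'
        rw [hw, show (𝓕⁻ χ : Lp ℂ 2 (volume : Measure V)) w = _ from hw', RCLike.inner_apply,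
          conj_fourierInv, hconj, mul_comm]

lemma lineDerivOp_toLp {u v : ℝ → F} (hu : MemLp u 2) (hv : MemLp v 2)
    (h : ∀ t, HasDerivAt u (v t) t) :
    ∂_{(1 : ℝ)} (hu.toLp u : 𝓢'(ℝ, F)) = (hv.toLp v : 𝓢'(ℝ, F)) := by
  ext φ
  have hint (ψ : 𝓢(ℝ, ℂ)) {w : ℝ → F} (hw : MemLp w 2) : Integrable fun x ↦ ψ x • w x :=
    memLp_one_iff_integrable.1 (hw.smul (ψ.memLp 2))
  have hparts := integral_bilinear_hasDerivAt_right_eq_neg_left_of_integrable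
    (L := (ContinuousLinearMap.lsmul ℝ ℂ : ℂ →L[ℝ] F →L[ℝ] F)) (fun x _ ↦ φ.hasDerivAt x)
    (fun x _ ↦ h x) (hint φ hv) (hint (SchwartzMap.derivCLM ℂ ℂ φ) hu) (hint φ hu)
  calc (∂_{(1 : ℝ)} (hu.toLp u : 𝓢'(ℝ, F))) φ = -∫ x, deriv φ x • hu.toLp u x := by
        simp [SchwartzMap.lineDerivOp_apply_eq_fderiv, integral_neg]
    _ = -∫ x, deriv φ x • u x := by
        rw [integral_congr_ae (hu.coeFn_toLp.mono fun x hx ↦ by simp only [hx]; rfl)]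
    _ = ∫ x, φ x • v x := hparts.symm
    _ = (hv.toLp v : 𝓢'(ℝ, F)) φ := by
        rw [Lp.toTemperedDistribution_apply]
        exact integral_congr_ae (hv.coeFn_toLp.mono fun x hx ↦ by simp only [hx])

theorem fourier_toLp_ae_eq_of_hasDerivAt {u v : ℝ → F} (hu : MemLp u 2) (hv : MemLp v 2)
    (h : ∀ t, HasDerivAt u (v t) t) :
    (𝓕 (hv.toLp v) : Lp F 2 (volume : Measure ℝ)) =ᵐ[volume]
      fun x ↦ (2 * π * Complex.I * x) • (𝓕 (hu.toLp u) : Lp F 2 (volume : Measure ℝ)) x := by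
  refine ae_eq_of_forall_integral_schwartz_smul_eq
    ((Lp.memLp _).locallyIntegrable one_le_two)
    (((Lp.memLp _).locallyIntegrable one_le_two).continuous_smul (by fun_prop)) fun φ ↦ ?_
  have hφ := DFunLike.congr_fun
    (TemperedDistribution.fourier_lineDerivOp_eq (hu.toLp u : 𝓢'(ℝ, F)) 1) φ
  rw [lineDerivOp_toLp hu hv h, Lp.fourier_toTemperedDistribution_eq,
    Lp.fourier_toTemperedDistribution_eq] at hφ
  have hx : (fun x : ℝ ↦ (x : ℂ)).HasTemperateGrowth := by fun_prop
  simp only [Lp.toTemperedDistribution_apply, RCLike.inner_apply, ringHom_apply, one_mul,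
    smul_apply, TemperedDistribution.smulLeftCLM_apply_apply] at hφ
  rw [hφ, ← integral_smul]
  congr with x
  simp only [smul_smul, SchwartzMap.smulLeftCLM_apply_apply hx, smul_eq_mul]
  ring_nf

lemma mul_fourier_indicator_Ioc {a b : ℝ} (hab : a ≤ b) (w : ℝ) :
    -(2 * π * Complex.I * w) * 𝓕 ((Ioc a b).indicator fun _ ↦ (1 : ℂ)) w =
      𝐞 (-(w * b)) - 𝐞 (-(w * a)) := by
  have hexp (x : ℝ) : (𝐞 (-(x * w)) : ℂ) = Complex.exp (-(2 * π * Complex.I * w) * x) := by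
    rw [fourierChar_apply]
    push_cast
    ring_nf
  have hint : 𝓕 ((Ioc a b).indicator fun _ ↦ (1 : ℂ)) w =
      ∫ x in a..b, Complex.exp (-(2 * π * Complex.I * w) * x) := by
    rw [fourier_real_eq, intervalIntegral.integral_of_le hab,
      ← integral_indicator measurableSet_Ioc]
    congr with x
    by_cases hx : x ∈ Ioc a b <;> simp [hx, Circle.smul_def, hexp]
  rcases eq_or_ne w 0 with rfl | hw
  · simp
  · have hc : -(2 * π * Complex.I * w) ≠ 0 := by simp [hw, pi_ne_zero]
    rw [hint, integral_exp_mul_complex hc, mul_div_cancel₀ _ hc, ← hexp, ← hexp, mul_comm b,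
      mul_comm a]

theorem fourier_sub_fourier_eq_setIntegral {f : ℝ → ℂ} (hf : Integrable f)
    (hu : MemLp (fun t : ℝ ↦ t * f t) 2) {a b : ℝ} (hab : a ≤ b) :
    𝓕 f b - 𝓕 f a =
      -(2 * π * Complex.I) * ∫ x in Ioc a b, (𝓕 (hu.toLp _) : Lp ℂ 2 (volume : Measure ℝ)) x := by
  have hint (x : ℝ) : Integrable fun t ↦ 𝐞 (-(t * x)) • f t := by
    simpa [mul_comm] using! (fourierIntegral_convergent_iff x).2 hf
  rw [setIntegral_fourier_toLp hu measurableSet_Ioc measure_Ioc_lt_top.ne, ← integral_const_mul,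
    fourier_real_eq, fourier_real_eq, ← integral_sub (hint b) (hint a)]
  congr with t
  rw [Circle.smul_def, Circle.smul_def, ← sub_smul, ← mul_fourier_indicator_Ioc hab, smul_eq_mul]
  ring

end FourierL2

section Carlson

variable {E : Type*} [NormedAddCommGroup E]

lemma eLpNorm_two_pow_two_eq_lintegral {α : Type*} {m : MeasurableSpace α} {μ : Measure α}
    (f : α → E) : eLpNorm f 2 μ ^ 2 = ∫⁻ x, ‖f x‖ₑ ^ 2 ∂μ := by
  simpa using eLpNorm_nnreal_pow_eq_lintegral (f := f) (μ := μ) (p := 2) two_ne_zero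

lemma lintegral_inv_one_add_mul_sq {c : ℝ} (hc : c ≠ 0) :
    ∫⁻ x : ℝ, ENNReal.ofReal (1 + (c * x) ^ 2)⁻¹ = ENNReal.ofReal (π / |c|) := by
  rw [← ofReal_integral_eq_lintegral_ofReal (integrable_inv_one_add_sq.comp_mul_left' hc)
      (ae_of_all _ fun x ↦ by positivity),
    Measure.integral_comp_mul_left (fun x : ℝ ↦ (1 + x ^ 2)⁻¹) c, integral_univ_inv_one_add_sq,
    abs_inv, smul_eq_mul, div_eq_inv_mul]

variable [NormedSpace ℝ E] {Q : ℝ → E}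

lemma eLpNorm_one_sq_le_add_eLpNorm_two_smul (hQ : AEStronglyMeasurable Q) {c : ℝ} (hc : 0 < c) :
    eLpNorm Q 1 volume ^ 2 ≤ ENNReal.ofReal (π / c) *
      (eLpNorm Q 2 volume ^ 2 +
        ENNReal.ofReal c ^ 2 * eLpNorm (fun x : ℝ ↦ x • Q x) 2 volume ^ 2) := by
  set w : ℝ → ℝ := fun x ↦ √(1 + (c * x) ^ 2)
  have hw (x : ℝ) : w x ^ 2 = 1 + (c * x) ^ 2 := sq_sqrt (by positivity)
  have hw₀ (x : ℝ) : 0 < w x := sqrt_pos.2 (by positivity)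
  have hwc : Continuous w := by fun_prop
  have hinv : eLpNorm (fun x ↦ (w x)⁻¹) 2 volume ^ 2 = ENNReal.ofReal (π / c) := by
    rw [eLpNorm_two_pow_two_eq_lintegral, ← abs_of_pos hc, ← lintegral_inv_one_add_mul_sq hc.ne']
    congr with x
    rw [Real.enorm_of_nonneg (inv_nonneg.2 (hw₀ x).le),
      ← ENNReal.ofReal_pow (inv_nonneg.2 (hw₀ x).le), inv_pow, hw]
  have hmul : eLpNorm (fun x ↦ w x • Q x) 2 volume ^ 2 =
      eLpNorm Q 2 volume ^ 2 +
        ENNReal.ofReal c ^ 2 * eLpNorm (fun x : ℝ ↦ x • Q x) 2 volume ^ 2 := by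
    simp only [eLpNorm_two_pow_two_eq_lintegral]
    rw [← lintegral_const_mul' _ _ (by finiteness), ← lintegral_add_left' (by fun_prop)]
    congr with x
    simp only [enorm_smul, mul_pow, ← Real.enorm_of_nonneg hc.le, Real.enorm_eq_ofReal_abs,
      ← ENNReal.ofReal_pow (abs_nonneg _), sq_abs, hw]
    rw [ENNReal.ofReal_add zero_le_one (by positivity), ENNReal.ofReal_mul (by positivity),
      add_mul, ENNReal.ofReal_one, one_mul, mul_assoc]
  have hQw : (fun x ↦ (w x)⁻¹) • (fun x ↦ w x • Q x) = Q := by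
    ext x
    exact inv_smul_smul₀ (hw₀ x).ne' _
  have hHolder : eLpNorm Q 1 volume ≤
      eLpNorm (fun x ↦ (w x)⁻¹) 2 volume * eLpNorm (fun x ↦ w x • Q x) 2 volume :=
    (congrArg (eLpNorm · 1 volume) hQw).ge.trans
      (eLpNorm_smul_le_mul_eLpNorm (hwc.aestronglyMeasurable.smul hQ)
        (hwc.inv₀ fun x ↦ (hw₀ x).ne').aestronglyMeasurable)
  rw [← hinv, ← hmul, ← mul_pow]
  exact pow_le_pow_left' hHolder 2

theorem eLpNorm_one_sq_le_mul_eLpNorm_two_smul (hQ : AEStronglyMeasurable Q) :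
    eLpNorm Q 1 volume ^ 2 ≤
      ENNReal.ofReal (2 * π) * (eLpNorm Q 2 volume * eLpNorm (fun x : ℝ ↦ x • Q x) 2 volume) := by
  have hxQ : AEStronglyMeasurable fun x : ℝ ↦ x • Q x := by fun_prop
  rcases eq_or_ne (eLpNorm Q 1 volume) 0 with h₀ | h₀
  · simp [h₀]
  have ha₀ : eLpNorm Q 2 volume ≠ 0 := fun h ↦ h₀ <| by
    rwa [eLpNorm_eq_zero_iff hQ one_ne_zero, ← eLpNorm_eq_zero_iff hQ two_ne_zero]
  have hb₀ : eLpNorm (fun x : ℝ ↦ x • Q x) 2 volume ≠ 0 := fun h ↦ h₀ <| by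
    rw [eLpNorm_eq_zero_iff hxQ two_ne_zero] at h
    rw [eLpNorm_eq_zero_iff hQ one_ne_zero]
    filter_upwards [h, Measure.ae_ne volume 0] with x hx hx₀
    exact (smul_eq_zero.1 hx).resolve_left hx₀
  rcases eq_or_ne (eLpNorm Q 2 volume) ∞ with ha | ha
  · simp [ha, hb₀, ENNReal.mul_top, pi_pos]
  rcases eq_or_ne (eLpNorm (fun x : ℝ ↦ x • Q x) 2 volume) ∞ with hb | hb
  · simp [hb, ha₀, ENNReal.mul_top, pi_pos]
  obtain ⟨a, ha', hQa⟩ : ∃ a : ℝ, 0 < a ∧ eLpNorm Q 2 volume = ENNReal.ofReal a :=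
    ⟨_, ENNReal.toReal_pos ha₀ ha, (ENNReal.ofReal_toReal ha).symm⟩
  obtain ⟨b, hb', hQb⟩ : ∃ b : ℝ, 0 < b ∧
      eLpNorm (fun x : ℝ ↦ x • Q x) 2 volume = ENNReal.ofReal b :=
    ⟨_, ENNReal.toReal_pos hb₀ hb, (ENNReal.ofReal_toReal hb).symm⟩
  -- This choice of `c` balances the two terms of the weighted bound.
  have hc : 0 < a / b := by positivity
  refine (eLpNorm_one_sq_le_add_eLpNorm_two_smul hQ hc).trans_eq ?_
  rw [hQa, hQb]
  simp only [← ENNReal.ofReal_pow, ← ENNReal.ofReal_mul, ← ENNReal.ofReal_add, ha'.le, hb'.le,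
    hc.le, two_pi_pos.le, (div_pos pi_pos hc).le, sq_nonneg, mul_nonneg]
  congr 1
  field_simp
  ring

end Carlson

section Variation

lemma eVariationOn_univ_le_lintegral {α : Type*} [PseudoEMetricSpace α] {p : ℝ → α} {q : ℝ → ℝ≥0∞}
    {μ : Measure ℝ} (h : ∀ a b, a ≤ b → edist (p b) (p a) ≤ ∫⁻ x in Ioc a b, q x ∂μ) :
    eVariationOn p univ ≤ ∫⁻ x, q x ∂μ := by
  refine iSup_le fun ⟨n, t, ht, _⟩ ↦ ?_
  calc ∑ i ∈ Finset.range n, edist (p (t (i + 1))) (p (t i))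
      ≤ ∑ i ∈ Finset.range n, ∫⁻ x in Ioc (t i) (t (i + 1)), q x ∂μ :=
        Finset.sum_le_sum fun i _ ↦ h _ _ (ht i.le_succ)
    _ = ∫⁻ x in ⋃ i ∈ Finset.range n, Ioc (t i) (t (i + 1)), q x ∂μ :=
        (lintegral_biUnion_finset ((ht.pairwise_disjoint_on_Ioc_succ).set_pairwise _)
          (fun _ _ ↦ measurableSet_Ioc) q).symm
    _ ≤ ∫⁻ x, q x ∂μ := setLIntegral_le_lintegral _ _

end Variation

section Density

lemma enorm_two_pi_mul_I : ‖2 * π * Complex.I‖ₑ = ENNReal.ofReal (2 * π) := by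
  rw [← ofReal_norm]
  simp [abs_of_pos pi_pos]

lemma fourier_comp_mul_left {E : Type*} [NormedAddCommGroup E] [NormedSpace ℂ E] (g : ℝ → E)
    {c : ℝ} (hc : c ≠ 0) (x : ℝ) : 𝓕 (fun t ↦ g (c * t)) x = |c⁻¹| • 𝓕 g (c⁻¹ * x) := by
  rw [fourier_real_eq, fourier_real_eq, ← Measure.integral_comp_mul_left]
  congr with t
  rw [mul_mul_mul_comm, mul_inv_cancel₀ hc, one_mul]

lemma eLpNorm_fourier_toLp_one_sq_le {F : Type*} [NormedAddCommGroup F] [InnerProductSpace ℂ F]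
    [CompleteSpace F] {u v : ℝ → F} (hu : MemLp u 2) (hv : MemLp v 2)
    (h : ∀ t, HasDerivAt u (v t) t) :
    eLpNorm (𝓕 (hu.toLp u) : Lp F 2 (volume : Measure ℝ)) 1 volume ^ 2 ≤
      eLpNorm u 2 volume * eLpNorm v 2 volume := by
  set U : Lp F 2 (volume : Measure ℝ) := 𝓕 (hu.toLp u)
  have hplancherel {w : ℝ → F} (hw : MemLp w 2) :
      eLpNorm (𝓕 (hw.toLp w) : Lp F 2 (volume : Measure ℝ)) 2 volume = eLpNorm w 2 volume := by
    rw [← Lp.enorm_def, ← ofReal_norm, Lp.norm_fourier_eq, ofReal_norm, Lp.enorm_def]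
    exact eLpNorm_congr_ae hw.coeFn_toLp
  have hv' : eLpNorm v 2 volume =
      ENNReal.ofReal (2 * π) * eLpNorm (fun x : ℝ ↦ x • U x) 2 volume := by
    rw [← hplancherel hv, eLpNorm_congr_ae (fourier_toLp_ae_eq_of_hasDerivAt hu hv h),
      ← enorm_two_pi_mul_I, ← eLpNorm_const_smul]
    simp only [Pi.smul_def, ← Complex.coe_smul, smul_smul]
    rfl
  calc eLpNorm U 1 volume ^ 2
      ≤ ENNReal.ofReal (2 * π) * (eLpNorm U 2 volume * eLpNorm (fun x : ℝ ↦ x • U x) 2 volume) :=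
        eLpNorm_one_sq_le_mul_eLpNorm_two_smul (Lp.aestronglyMeasurable U)
    _ = eLpNorm u 2 volume * eLpNorm v 2 volume := by
        rw [hplancherel hu, hv', mul_left_comm]

lemma eVariationOn_fourier_le_eLpNorm_one {f : ℝ → ℂ} (hf : Integrable f)
    (hu : MemLp (fun t : ℝ ↦ t * f t) 2) :
    eVariationOn (𝓕 f) univ ≤ ENNReal.ofReal (2 * π) *
      eLpNorm (𝓕 (hu.toLp _) : Lp ℂ 2 (volume : Measure ℝ)) 1 volume := by
  rw [eLpNorm_one_eq_lintegral_enorm, ← lintegral_const_mul' _ _ ENNReal.ofReal_ne_top]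
  refine eVariationOn_univ_le_lintegral fun a b hab ↦ ?_
  rw [edist_eq_enorm_sub, fourier_sub_fourier_eq_setIntegral hf hu hab, enorm_mul,
    lintegral_const_mul' _ _ ENNReal.ofReal_ne_top]
  gcongr
  · rw [enorm_neg, enorm_two_pi_mul_I]
  · exact enorm_integral_le_lintegral_enorm _

lemma eVariationOn_re_fourier_comp_mul_left_le (g : ℝ → ℂ) {c : ℝ} (hc : 0 < c) :
    eVariationOn (fun x ↦ (𝓕 (fun t ↦ g (c * t)) x).re) univ ≤
      ENNReal.ofReal c⁻¹ * eVariationOn (𝓕 g) univ := by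
  set φ : ℂ →L[ℝ] ℝ := c⁻¹ • Complex.reCLM
  have hlip : LipschitzWith c⁻¹.toNNReal φ :=
    AddMonoidHomClass.lipschitz_of_bound φ c⁻¹ fun z ↦ by
      simpa [φ, abs_of_pos hc] using
        mul_le_mul_of_nonneg_left (Complex.abs_re_le_norm z) (inv_nonneg.2 hc.le)
  calc eVariationOn (fun x ↦ (𝓕 (fun t ↦ g (c * t)) x).re) univ
      = eVariationOn (φ ∘ 𝓕 g ∘ (c⁻¹ * ·)) univ := by
        congr with x
        rw [fourier_comp_mul_left g hc.ne', abs_of_pos (inv_pos.2 hc)]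
        simp [φ]
    _ ≤ ENNReal.ofReal c⁻¹ * eVariationOn (𝓕 g ∘ (c⁻¹ * ·)) univ :=
        (hlip.lipschitzOnWith (s := univ)).comp_eVariationOn_le (mapsTo_univ _ _)
    _ ≤ ENNReal.ofReal c⁻¹ * eVariationOn (𝓕 g) univ := by
        gcongr
        exact eVariationOn.comp_le_of_monotoneOn _ _
          ((monotone_mul_left_of_nonneg (inv_pos.2 hc).le).monotoneOn _) (mapsTo_univ _ _)

end Density

section MomentConditions

variable {E : Type*} [NormedAddCommGroup E]

lemma eLpNorm_two_eq_ofReal_sqrt_integral {α : Type*} {m : MeasurableSpace α} {μ : Measure α}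
    {f : α → E} (hf : MemLp f 2 μ) :
    eLpNorm f 2 μ = ENNReal.ofReal √(∫ x, ‖f x‖ ^ 2 ∂μ) := by
  rw [hf.eLpNorm_eq_integral_rpow_norm two_ne_zero ENNReal.ofNat_ne_top, sqrt_eq_rpow]
  simp

variable [NormedSpace ℝ E]

lemma integrable_of_memLp_two_of_memLp_smul {f : ℝ → E} (hf : MemLp f 2)
    (hu : MemLp (fun t : ℝ ↦ t • f t) 2) :
    Integrable f := by
  refine memLp_one_iff_integrable.1 ⟨hf.aestronglyMeasurable, ?_⟩
  refine (ENNReal.pow_lt_top_iff.1 ?_).resolve_right two_ne_zero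
  exact (eLpNorm_one_sq_le_mul_eLpNorm_two_smul hf.aestronglyMeasurable).trans_lt
    (ENNReal.mul_lt_top ENNReal.ofReal_lt_top (ENNReal.mul_lt_top hf.2 hu.2))

lemma memLp_two_of_continuous_of_memLp_smul {f : ℝ → E} (hf : Continuous f)
    (hu : MemLp (fun t : ℝ ↦ t • f t) 2) : MemLp f 2 := by
  rw [memLp_two_iff_integrable_sq_norm hf.aestronglyMeasurable, ← integrableOn_univ,
    ← union_compl_self (Icc (-1 : ℝ) 1), integrableOn_union]
  refine ⟨(by fun_prop : Continuous fun t ↦ ‖f t‖ ^ 2).integrableOn_Icc, ?_⟩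
  have hu' := (memLp_two_iff_integrable_sq_norm hu.aestronglyMeasurable).1 hu
  refine hu'.integrableOn.mono' (by fun_prop)
    (ae_restrict_of_forall_mem measurableSet_Icc.compl fun t ht ↦ ?_)
  have ht' : 1 ≤ |t| := by
    rw [mem_compl_iff, mem_Icc, ← abs_le, not_le] at ht
    exact ht.le
  rw [norm_of_nonneg (by positivity), norm_smul, norm_eq_abs]
  gcongr
  exact le_mul_of_one_le_left (norm_nonneg _) ht'

lemma memLp_mul_of_integrable_sq_mul_add {f g : ℝ → ℂ} (hf : AEStronglyMeasurable f)
    (h : Integrable fun t ↦ t ^ 2 * (‖f t‖ ^ 2 + ‖g t‖ ^ 2)) :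
    MemLp (fun t : ℝ ↦ t * f t) 2 := by
  have hm : AEStronglyMeasurable fun t : ℝ ↦ t * f t := by fun_prop
  refine (memLp_two_iff_integrable_sq_norm hm).2
    (h.mono' (by fun_prop) (ae_of_all _ fun t ↦ ?_))
  rw [norm_of_nonneg (by positivity), norm_mul, Complex.norm_real, mul_pow, norm_eq_abs, sq_abs]
  gcongr
  exact le_add_of_nonneg_right (by positivity)

lemma hasDerivAt_ofReal_mul_of_ne_zero {f f' : ℝ → ℂ} (hf : ContinuousAt f 0)
    (hf' : ∀ t ≠ 0, HasDerivAt f (f' t) t) (t : ℝ) :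
    HasDerivAt (fun s : ℝ ↦ s * f s) (f t + t * f' t) t := by
  rcases eq_or_ne t 0 with rfl | ht
  · rw [Complex.ofReal_zero, zero_mul, add_zero, hasDerivAt_iff_tendsto_slope]
    refine (hf.tendsto.mono_left nhdsWithin_le_nhds).congr' ?_
    filter_upwards [self_mem_nhdsWithin] with s hs
    simp [slope_def_module, inv_mul_cancel_left₀ (Complex.ofReal_ne_zero.2 hs)]
  · exact ((hasDerivAt_id t).ofReal_comp.mul (hf' t ht)).congr_deriv (by simp)

lemma aestronglyMeasurable_of_ae_hasDerivAt [CompleteSpace E] {f f' : ℝ → E} {μ : Measure ℝ}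
    (hf' : ∀ᵐ t ∂μ, HasDerivAt f (f' t) t) : AEStronglyMeasurable f' μ :=
  (aestronglyMeasurable_deriv f μ).congr (hf'.mono fun _ ht ↦ ht.deriv)

end MomentConditions

theorem eVariationOn_re_fourier_le {f v : ℝ → ℂ} (hf : Integrable f)
    (hu : MemLp (fun t : ℝ ↦ t * f t) 2) (hv : MemLp v 2)
    (h : ∀ t, HasDerivAt (fun s : ℝ ↦ s * f s) (v t) t) :
    eVariationOn (fun x ↦ (𝓕 (fun t ↦ f (2 * π * t)) x).re) univ ≤ ENNReal.ofReal
      (((∫ t : ℝ, ‖t * f t‖ ^ 2) * ∫ t, ‖v t‖ ^ 2) ^ ((1 : ℝ) / 4)) := by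
  set A := ∫ t : ℝ, ‖t * f t‖ ^ 2
  set B := ∫ t, ‖v t‖ ^ 2
  set U : Lp ℂ 2 (volume : Measure ℝ) := 𝓕 (hu.toLp _)
  have hA : 0 ≤ A := integral_nonneg fun _ ↦ by positivity
  have hAB : 0 ≤ A * B := mul_nonneg hA (integral_nonneg fun _ ↦ by positivity)
  have hvar : eVariationOn (fun x ↦ (𝓕 (fun t ↦ f (2 * π * t)) x).re) univ ≤
      eLpNorm U 1 volume := by
    calc eVariationOn (fun x ↦ (𝓕 (fun t ↦ f (2 * π * t)) x).re) univ
        ≤ ENNReal.ofReal (2 * π)⁻¹ * (ENNReal.ofReal (2 * π) * eLpNorm U 1 volume) := by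
          grw [eVariationOn_re_fourier_comp_mul_left_le f two_pi_pos,
            eVariationOn_fourier_le_eLpNorm_one hf hu]
      _ = eLpNorm U 1 volume := by
          rw [← mul_assoc, ← ENNReal.ofReal_mul (by positivity),
            inv_mul_cancel₀ two_pi_pos.ne', ENNReal.ofReal_one, one_mul]
  refine hvar.trans ((ENNReal.pow_le_pow_left_iff two_ne_zero).1 ?_)
  calc eLpNorm U 1 volume ^ 2
      ≤ eLpNorm (fun t : ℝ ↦ t * f t) 2 volume * eLpNorm v 2 volume :=
        eLpNorm_fourier_toLp_one_sq_le hu hv h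
    _ = ENNReal.ofReal √(A * B) := by
        rw [eLpNorm_two_eq_ofReal_sqrt_integral hu, eLpNorm_two_eq_ofReal_sqrt_integral hv,
          ← ENNReal.ofReal_mul (sqrt_nonneg _), ← sqrt_mul hA]
    _ = ENNReal.ofReal ((A * B) ^ ((1 : ℝ) / 4)) ^ 2 := by
        rw [← ENNReal.ofReal_pow (by positivity), ← rpow_mul_natCast hAB, sqrt_eq_rpow]
        norm_num

lemma charFun_map_eq_integral {Ω : Type*} {m : MeasurableSpace Ω} {P : Measure Ω} {X : Ω → ℝ}
    (hX : AEMeasurable X P) (t : ℝ) :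
    charFun (P.map X) t = ∫ ω, Complex.exp (Complex.I * t * X ω) ∂P := by
  rw [charFun_apply_real, integral_map hX (by fun_prop)]
  congr with ω
  ring_nf

theorem density_tv_bound_of_charFun_L2_general {μ : Measure ℝ} [IsFiniteMeasure μ] {f' : ℝ → ℂ}
    (hf' : ∀ t ≠ 0, HasDerivAt (charFun μ) (f' t) t)
    (hint : Integrable fun t ↦ t ^ 2 * (‖charFun μ t‖ ^ 2 + ‖f' t‖ ^ 2)) :
    ∃ p : ℝ → ℝ,
      μ = volume.withDensity (fun x ↦ ENNReal.ofReal (p x)) ∧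
      eVariationOn p univ ≤ ENNReal.ofReal
        (((∫ t : ℝ, ‖(t : ℂ) * charFun μ t‖ ^ 2) *
          (∫ t : ℝ, ‖charFun μ t + (t : ℂ) * f' t‖ ^ 2)) ^ ((1 : ℝ) / 4)) := by
  have hfc : Continuous (charFun μ) := continuous_charFun
  have hu : MemLp (fun t : ℝ ↦ t * charFun μ t) 2 :=
    memLp_mul_of_integrable_sq_mul_add hfc.aestronglyMeasurable hint
  have hg : MemLp (fun t : ℝ ↦ t * f' t) 2 :=
    memLp_mul_of_integrable_sq_mul_add
      (aestronglyMeasurable_of_ae_hasDerivAt ((Measure.ae_ne volume 0).mono hf'))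
      (by simpa only [add_comm] using hint)
  have hf : MemLp (charFun μ) 2 := memLp_two_of_continuous_of_memLp_smul hfc hu
  have hf₁ : Integrable (charFun μ) := integrable_of_memLp_two_of_memLp_smul hf hu
  refine ⟨_, eq_withDensity_fourier_charFun (hf₁.comp_smul two_pi_pos.ne'), ?_⟩
  exact eVariationOn_re_fourier_le hf₁ hu (hf.add hg)
    (hasDerivAt_ofReal_mul_of_ne_zero hfc.continuousAt hf')

/-- If the characteristic function `f` of `X` has a continuous derivative `f'` for `t > 0`
and `∫ t² (|f(t)|² + |f'(t)|²) dt < ∞`, then `X` has an absolutely continuous distribution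
with density `p` of bounded variation satisfying
`‖p‖_TV ≤ (∫ |t f(t)|² dt · ∫ |(t f(t))'|² dt)^{1/4}`. -/
theorem density_tv_bound_of_charFun_L2
    {Ω : Type*} [MeasureSpace Ω] [IsProbabilityMeasure (ℙ : Measure Ω)]
    (X : Ω → ℝ) (hXm : Measurable X)
    (f f' : ℝ → ℂ)
    (hf : ∀ t : ℝ, f t = ∫ ω, Complex.exp (Complex.I * t * X ω))
    (hf' : ∀ t : ℝ, t ≠ 0 → HasDerivAt f (f' t) t)
    (hcont : ContinuousOn f' (Set.Ioi 0))
    (hint : Integrable (fun t => t ^ 2 * (‖f t‖ ^ 2 + ‖f' t‖ ^ 2))) :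
    ∃ p : ℝ → ℝ,
      Measure.map X ℙ = volume.withDensity (fun x => ENNReal.ofReal (p x)) ∧
      eVariationOn p Set.univ ≤ ENNReal.ofReal
        (((∫ t : ℝ, ‖(t : ℂ) * f t‖ ^ 2) *
          (∫ t : ℝ, ‖f t + (t : ℂ) * f' t‖ ^ 2)) ^ ((1 : ℝ) / 4)) := by
  obtain rfl : f = charFun (Measure.map X ℙ) :=
    funext fun t ↦ (hf t).trans (charFun_map_eq_integral hXm.aemeasurable t).symm
  exact density_tv_bound_of_charFun_L2_general hf' hint
end

section
/- If X has density p, then for any s ≥ 1 and all x ∈ ℝ, p(x) ≤ C/(1+|x|^s) with C = s β_{s−1} + √((1+β_{2s}) I(X)), where β_r = E|X|^r; moreover if C < ∞ then (1+|x|^s) p(x) → 0 as |x| → ∞. -/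
open MeasureTheory Real Filter

/-!
Integrating `((1 + |x|^s) p)'` over both half-lines bounds `2 (1 + |x|^s) p(x)` by the total
variation, and shows that `(1 + |x|^s) p` vanishes at infinity. The part of the total variation
coming from the derivative of the weight is at most `s β_{s-1}`; the part coming from `p'` is
estimated by the Cauchy–Schwarz inequality in the form
`∫ w |p'| = ∫ (w √p) (|p'| / √p) ≤ √(∫ w² p) √I`.
-/

open scoped Topology

/-- `f` is an indefinite integral of `f'`: it is locally absolutely continuous with almost
everywhere derivative `f'`. The equivalent integral form is used, which also makes sense for
vector-valued functions. -/
structure IsIndefiniteIntegral {E : Type*} [NormedAddCommGroup E] [NormedSpace ℝ E]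
    (f f' : ℝ → E) : Prop where
  locallyIntegrable : LocallyIntegrable f'
  sub_eq_integral (a b : ℝ) : f b - f a = ∫ x in a..b, f' x

lemma locallyIntegrable_iff_forall_intervalIntegrable {E : Type*} [NormedAddCommGroup E]
    {f : ℝ → E} : LocallyIntegrable f ↔ ∀ a b, IntervalIntegrable f volume a b where
  mp hf _ _ := intervalIntegrable_iff.2 <|
    (hf.integrableOn_isCompact isCompact_uIcc).mono_set Set.uIoc_subset_uIcc
  mpr hf x :=
    ⟨Set.Ioc (x - 1) (x + 1), Ioc_mem_nhds (by linarith) (by linarith), (hf _ _).1⟩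

namespace IsIndefiniteIntegral

section NormedSpace

variable {E : Type*} [NormedAddCommGroup E] [NormedSpace ℝ E] {f f' : ℝ → E}

lemma intervalIntegrable (h : IsIndefiniteIntegral f f') (a b : ℝ) :
    IntervalIntegrable f' volume a b :=
  locallyIntegrable_iff_forall_intervalIntegrable.1 h.locallyIntegrable a b

lemma eq_add_integral (h : IsIndefiniteIntegral f f') (a x : ℝ) :
    f x = f a + ∫ t in a..x, f' t :=
  sub_eq_iff_eq_add'.1 (h.sub_eq_integral a x)

lemma const_add (h : IsIndefiniteIntegral f f') (c : E) :
    IsIndefiniteIntegral (fun x ↦ c + f x) f' where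
  locallyIntegrable := h.locallyIntegrable
  sub_eq_integral a b := by rw [add_sub_add_left_eq_sub, h.sub_eq_integral]

lemma continuous (h : IsIndefiniteIntegral f f') : Continuous f := by
  rw [funext (h.eq_add_integral 0)]
  exact continuous_const.add (intervalIntegral.continuous_primitive h.intervalIntegrable 0)

lemma ae_hasDerivAt [CompleteSpace E] (h : IsIndefiniteIntegral f f') :
    ∀ᵐ x, HasDerivAt f (f' x) x := by
  filter_upwards [LocallyIntegrable.ae_hasDerivAt_integral h.locallyIntegrable] with x hx
  rw [funext (h.eq_add_integral 0)]
  exact (hx 0).const_add (f 0)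

lemma tendsto_atTop (h : IsIndefiniteIntegral f f') {a : ℝ} (hf' : IntegrableOn f' (Set.Ioi a)) :
    Tendsto f atTop (𝓝 (f a + ∫ x in Set.Ioi a, f' x)) := by
  rw [funext (h.eq_add_integral a)]
  simpa using (intervalIntegral_tendsto_integral_Ioi a hf' tendsto_id).const_add (f a)

lemma tendsto_atBot (h : IsIndefiniteIntegral f f') {a : ℝ} (hf' : IntegrableOn f' (Set.Iic a)) :
    Tendsto f atBot (𝓝 (f a - ∫ x in Set.Iic a, f' x)) := by
  have hf : f = fun x ↦ f a - ∫ t in x..a, f' t := by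
    funext x
    rw [h.eq_add_integral a x, intervalIntegral.integral_symm x a, sub_eq_add_neg]
  rw [hf]
  simpa using (intervalIntegral_tendsto_integral_Iic a hf' tendsto_id).const_sub (f a)

lemma eq_neg_integral_Ioi (h : IsIndefiniteIntegral f f') (hf : Integrable f)
    (hf' : Integrable f') (a : ℝ) : f a = -∫ x in Set.Ioi a, f' x := by
  refine eq_neg_of_add_eq_zero_left <| (hf.integrableAtFilter _).eq_zero_of_tendsto
    (fun s hs ↦ ?_) (h.tendsto_atTop hf'.integrableOn)
  obtain ⟨c, hc⟩ := mem_atTop_sets.1 hs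
  exact top_unique (volume_Ici (a := c) ▸ measure_mono hc)

lemma eq_integral_Iic (h : IsIndefiniteIntegral f f') (hf : Integrable f)
    (hf' : Integrable f') (a : ℝ) : f a = ∫ x in Set.Iic a, f' x := by
  refine sub_eq_zero.1 <| (hf.integrableAtFilter _).eq_zero_of_tendsto
    (fun s hs ↦ ?_) (h.tendsto_atBot hf'.integrableOn)
  obtain ⟨c, hc⟩ := mem_atBot_sets.1 hs
  exact top_unique (volume_Iic (a := c) ▸ measure_mono hc)

lemma tendsto_cocompact_zero (h : IsIndefiniteIntegral f f') (hf : Integrable f)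
    (hf' : Integrable f') : Tendsto f (cocompact ℝ) (𝓝 0) := by
  have hBot : f 0 - ∫ x in Set.Iic 0, f' x = 0 := sub_eq_zero.2 (h.eq_integral_Iic hf hf' 0)
  have hTop : f 0 + ∫ x in Set.Ioi 0, f' x = 0 := by
    rw [h.eq_neg_integral_Ioi hf hf' 0, neg_add_cancel]
  rw [cocompact_eq_atBot_atTop]
  exact (hBot ▸ h.tendsto_atBot hf'.integrableOn).sup (hTop ▸ h.tendsto_atTop hf'.integrableOn)

lemma two_mul_norm_le_integral_norm (h : IsIndefiniteIntegral f f') (hf : Integrable f)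
    (hf' : Integrable f') (x : ℝ) : 2 * ‖f x‖ ≤ ∫ y, ‖f' y‖ :=
  calc 2 * ‖f x‖ = ‖∫ y in Set.Iic x, f' y‖ + ‖∫ y in Set.Ioi x, f' y‖ := by
        rw [← h.eq_integral_Iic hf hf', ← norm_neg (∫ y in Set.Ioi x, f' y),
          ← h.eq_neg_integral_Ioi hf hf', two_mul]
    _ ≤ (∫ y in Set.Iic x, ‖f' y‖) + ∫ y in Set.Ioi x, ‖f' y‖ :=
        add_le_add (norm_integral_le_integral_norm _) (norm_integral_le_integral_norm _)
    _ = ∫ y, ‖f' y‖ :=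
        intervalIntegral.integral_Iic_add_Ioi hf'.norm.integrableOn hf'.norm.integrableOn

/- If `f'` is not integrable on an interval, neither is it on a larger one, and the integrals there
take the junk value `0`: `f` is then constant on an unbounded set. -/
lemma eq_zero_of_not_intervalIntegrable (hf : Integrable f)
    (hFTC : ∀ a b, f b - f a = ∫ x in a..b, f' x) {a b : ℝ}
    (hab : ¬IntervalIntegrable f' volume a b) : f a = 0 ∧ f b = 0 := by
  wlog hle : a ≤ b generalizing a b
  · exact (this (fun h ↦ hab h.symm) (le_of_not_ge hle)).symm
  have hconst : ∀ c ≤ a, f b = f c := fun c hc ↦ by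
    have hcb : ¬IntervalIntegrable f' volume c b := fun h ↦
      hab (h.mono_set (Set.uIcc_subset_uIcc (Set.mem_uIcc_of_le hc hle) Set.right_mem_uIcc))
    rw [← sub_eq_zero, hFTC, intervalIntegral.integral_undef hcb]
  have hb : f b = 0 := by
    have : IntegrableOn (fun _ ↦ f b) (Set.Iic a) :=
      hf.integrableOn.congr_fun (fun c hc ↦ (hconst c hc).symm) measurableSet_Iic
    simpa [integrableOn_const_iff] using this
  exact ⟨hconst a le_rfl ▸ hb, hb⟩

lemma of_forall_sub_eq_integral (hf : Integrable f) (hzero : ∀ x, f x = 0 → f' x = 0)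
    (hFTC : ∀ a b, f b - f a = ∫ x in a..b, f' x) : IsIndefiniteIntegral f f' := by
  refine ⟨locallyIntegrable_iff_forall_intervalIntegrable.2 fun a b ↦ ?_, hFTC⟩
  by_contra hab
  have hf0 (c : ℝ) : f c = 0 := by
    by_cases hac : IntervalIntegrable f' volume a c
    · exact (eq_zero_of_not_intervalIntegrable hf hFTC fun hcb ↦ hab (hac.trans hcb)).1
    · exact (eq_zero_of_not_intervalIntegrable hf hFTC hac).2
  have hf'0 : f' = 0 := funext fun x ↦ hzero x (hf0 x)
  exact hab (hf'0 ▸ intervalIntegrable_const)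

end NormedSpace

section Real

variable {f f' g g' : ℝ → ℝ}

lemma absolutelyContinuousOnInterval (h : IsIndefiniteIntegral f f') (a b : ℝ) :
    AbsolutelyContinuousOnInterval f a b := by
  have hconst : AbsolutelyContinuousOnInterval (fun _ ↦ f a) a b :=
    contDiff_const.contDiffOn.absolutelyContinuousOnInterval
  rw [funext (h.eq_add_integral a)]
  exact hconst.add ((h.intervalIntegrable a b).absolutelyContinuousOnInterval_intervalIntegral
    Set.left_mem_uIcc)

lemma mul (hf : IsIndefiniteIntegral f f') (hg : IsIndefiniteIntegral g g') :
    IsIndefiniteIntegral (fun x ↦ f x * g x) (fun x ↦ f' x * g x + f x * g' x) where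
  locallyIntegrable := (hf.locallyIntegrable.mul_continuous hg.continuous).add
    (hg.locallyIntegrable.continuous_mul hf.continuous)
  sub_eq_integral a b := by
    rw [← (hf.absolutelyContinuousOnInterval a b).integral_deriv_mul_eq_sub
      (hg.absolutelyContinuousOnInterval a b)]
    refine intervalIntegral.integral_congr_ae ?_
    filter_upwards [hf.ae_hasDerivAt, hg.ae_hasDerivAt] with x hfx hgx _
    rw [hfx.deriv, hgx.deriv]

end Real

end IsIndefiniteIntegral

lemma abs_mul_abs_rpow_mul_sign_le {s : ℝ} (hs : 0 ≤ s) (r x : ℝ) :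
    |s * |x| ^ r * SignType.sign x| ≤ s * |x| ^ r := by
  have hsign : |(SignType.sign x : ℝ)| ≤ 1 := by
    rcases lt_trichotomy x 0 with h | h | h <;> simp [h]
  have hnonneg : 0 ≤ s * |x| ^ r := by positivity
  rw [abs_mul, abs_of_nonneg hnonneg]
  exact mul_le_of_le_one_right hnonneg hsign

lemma measurable_sign_coe : Measurable fun x : ℝ ↦ (SignType.sign x : ℝ) := by
  refine Monotone.measurable fun x y hxy ↦ ?_
  simp only [sign_apply]
  split_ifs <;> simp <;> linarith

lemma locallyIntegrable_abs_rpow_sub_one_mul_sign {s : ℝ} (hs : 0 < s) :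
    LocallyIntegrable fun x : ℝ ↦ s * |x| ^ (s - 1) * SignType.sign x := by
  refine locallyIntegrable_of_norm_le_rpow (C := s) (α := 1 - s) (by simp) (by simpa)
    (Eventually.of_forall fun x ↦ ?_)
    (Measurable.mul (by fun_prop) measurable_sign_coe).aestronglyMeasurable
  simpa using abs_mul_abs_rpow_mul_sign_le hs.le (s - 1) x

lemma isIndefiniteIntegral_abs_rpow {s : ℝ} (hs : 0 < s) :
    IsIndefiniteIntegral (fun x ↦ |x| ^ s) fun x ↦ s * |x| ^ (s - 1) * SignType.sign x where
  locallyIntegrable := locallyIntegrable_abs_rpow_sub_one_mul_sign hs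
  sub_eq_integral a b := by
    refine (integral_eq_of_hasDerivAt_off_countable (fun x : ℝ ↦ |x| ^ s) _
      (Set.countable_singleton (0 : ℝ)) ?_ (fun x hx ↦ ?_) ?_).symm
    · exact (continuous_abs.rpow_const fun _ ↦ .inr hs.le).continuousOn
    · have hx0 : x ≠ 0 := hx.2
      refine ((hasDerivAt_abs hx0).rpow_const (.inl (abs_ne_zero.2 hx0))).congr_deriv ?_
      ring
    · exact locallyIntegrable_iff_forall_intervalIntegrable.1
        (locallyIntegrable_abs_rpow_sub_one_mul_sign hs) a b

lemma mul_sqrt_mul_div_sqrt {α : Type*} {p q w : α → ℝ} (hnn : ∀ x, 0 ≤ p x)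
    (hpq : ∀ x, p x = 0 → q x = 0) (x : α) :
    w x * √(p x) * (q x / √(p x)) = w x * q x := by
  rcases (hnn x).eq_or_lt with hx | hx
  · simp [hpq x hx.symm]
  · have := (sqrt_pos.2 hx).ne'
    field_simp

section CauchySchwarz

variable {α : Type*} [MeasurableSpace α] {μ : Measure α} {f g p q w : α → ℝ}

lemma integral_abs_mul_le_sqrt_integral_sq_mul (hf : MemLp f 2 μ) (hg : MemLp g 2 μ) :
    ∫ x, |f x * g x| ∂μ ≤ √((∫ x, f x ^ 2 ∂μ) * ∫ x, g x ^ 2 ∂μ) := by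
  have := integral_mul_norm_le_Lp_mul_Lq HolderConjugate.two_two (μ := μ) (f := f) (g := g)
    (by simpa using hf) (by simpa using hg)
  rw [Real.sqrt_mul (integral_nonneg fun x ↦ sq_nonneg (f x))]
  simpa [abs_mul, sqrt_eq_rpow] using this

lemma integrable_mul_of_integrable_sq_mul (hnn : ∀ x, 0 ≤ p x) (hw : AEStronglyMeasurable w μ)
    (hp : Integrable p μ) (hwp : Integrable (fun x ↦ w x ^ 2 * p x) μ) :
    Integrable (fun x ↦ w x * p x) μ := by
  refine (hp.add hwp).mono' (hw.mul hp.1) (Eventually.of_forall fun x ↦ ?_)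
  have hw_le : |w x| ≤ 1 + w x ^ 2 := by
    nlinarith [sq_nonneg (|w x| - 1), sq_abs (w x), abs_nonneg (w x)]
  calc ‖w x * p x‖ = |w x| * p x := by rw [norm_mul, norm_eq_abs, norm_of_nonneg (hnn x)]
    _ ≤ (1 + w x ^ 2) * p x := mul_le_mul_of_nonneg_right hw_le (hnn x)
    _ = p x + w x ^ 2 * p x := by ring

lemma memLp_two_mul_sqrt (hnn : ∀ x, 0 ≤ p x) (hw : AEStronglyMeasurable w μ)
    (hp : AEStronglyMeasurable p μ) (hwp : Integrable (fun x ↦ w x ^ 2 * p x) μ) :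
    MemLp (fun x ↦ w x * √(p x)) 2 μ := by
  have hsqrt : AEStronglyMeasurable (fun x ↦ √(p x)) μ :=
    continuous_sqrt.comp_aestronglyMeasurable hp
  refine (memLp_two_iff_integrable_sq (hw.mul hsqrt)).2 ?_
  simpa only [Pi.mul_apply, mul_pow, sq_sqrt (hnn _)] using hwp

lemma memLp_two_div_sqrt (hnn : ∀ x, 0 ≤ p x) (hq : AEStronglyMeasurable q μ)
    (hp : AEStronglyMeasurable p μ) (hqp : Integrable (fun x ↦ q x ^ 2 / p x) μ) :
    MemLp (fun x ↦ q x / √(p x)) 2 μ := by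
  have hsqrt : AEMeasurable (fun x ↦ √(p x)) μ := hp.aemeasurable.sqrt
  refine (memLp_two_iff_integrable_sq (hq.aemeasurable.div hsqrt).aestronglyMeasurable).2 ?_
  simpa only [Pi.div_apply, div_pow, sq_sqrt (hnn _)] using hqp

lemma integrable_mul_of_integrable_sq_mul_of_integrable_sq_div (hnn : ∀ x, 0 ≤ p x)
    (hpq : ∀ x, p x = 0 → q x = 0) (hw : AEStronglyMeasurable w μ)
    (hq : AEStronglyMeasurable q μ) (hp : AEStronglyMeasurable p μ)
    (hwp : Integrable (fun x ↦ w x ^ 2 * p x) μ) (hqp : Integrable (fun x ↦ q x ^ 2 / p x) μ) :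
    Integrable (fun x ↦ w x * q x) μ := by
  simpa only [Pi.mul_def, mul_sqrt_mul_div_sqrt hnn hpq] using
    (memLp_two_mul_sqrt hnn hw hp hwp).integrable_mul (memLp_two_div_sqrt hnn hq hp hqp)

lemma integral_abs_mul_le_sqrt_integral_sq_mul_integral_sq_div (hnn : ∀ x, 0 ≤ p x)
    (hpq : ∀ x, p x = 0 → q x = 0) (hw : AEStronglyMeasurable w μ)
    (hq : AEStronglyMeasurable q μ) (hp : AEStronglyMeasurable p μ)
    (hwp : Integrable (fun x ↦ w x ^ 2 * p x) μ) (hqp : Integrable (fun x ↦ q x ^ 2 / p x) μ) :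
    ∫ x, |w x * q x| ∂μ ≤ √((∫ x, w x ^ 2 * p x ∂μ) * ∫ x, q x ^ 2 / p x ∂μ) := by
  simpa only [mul_sqrt_mul_div_sqrt hnn hpq, mul_pow, div_pow, sq_sqrt (hnn _)] using
    integral_abs_mul_le_sqrt_integral_sq_mul (memLp_two_mul_sqrt hnn hw hp hwp)
      (memLp_two_div_sqrt hnn hq hp hqp)

end CauchySchwarz

theorem IsIndefiniteIntegral.two_mul_abs_mul_le_and_tendsto_cocompact {p p' w w' : ℝ → ℝ}
    (hp : IsIndefiniteIntegral p p') (hw : IsIndefiniteIntegral w w') (hnn : ∀ x, 0 ≤ p x)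
    (hint : Integrable p) (hconv : ∀ x, p x = 0 → p' x = 0)
    (hfisher : Integrable fun x ↦ p' x ^ 2 / p x) (hw'p : Integrable fun x ↦ w' x * p x)
    (hwp : Integrable fun x ↦ w x ^ 2 * p x) :
    (∀ x, 2 * |w x * p x| ≤
        (∫ y, |w' y * p y|) + √((∫ y, w y ^ 2 * p y) * ∫ y, p' y ^ 2 / p y)) ∧
      Tendsto (fun x ↦ w x * p x) (cocompact ℝ) (𝓝 0) := by
  have hwmeas : AEStronglyMeasurable w := hw.continuous.aestronglyMeasurable
  have hp'meas : AEStronglyMeasurable p' := hp.locallyIntegrable.aestronglyMeasurable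
  have hwp_int : Integrable fun x ↦ w x * p x :=
    integrable_mul_of_integrable_sq_mul hnn hwmeas hint hwp
  have hwp'_int : Integrable fun x ↦ w x * p' x :=
    integrable_mul_of_integrable_sq_mul_of_integrable_sq_div hnn hconv hwmeas hp'meas hint.1 hwp
      hfisher
  have hderiv_int : Integrable fun x ↦ w' x * p x + w x * p' x := hw'p.add hwp'_int
  refine ⟨fun x ↦ ?_, (hw.mul hp).tendsto_cocompact_zero hwp_int hderiv_int⟩
  calc 2 * |w x * p x|
      ≤ ∫ y, |w' y * p y + w y * p' y| :=
        (hw.mul hp).two_mul_norm_le_integral_norm hwp_int hderiv_int x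
    _ ≤ ∫ y, (|w' y * p y| + |w y * p' y|) :=
        integral_mono hderiv_int.abs (hw'p.abs.add hwp'_int.abs) fun _ ↦ abs_add_le _ _
    _ = (∫ y, |w' y * p y|) + ∫ y, |w y * p' y| := integral_add hw'p.abs hwp'_int.abs
    _ ≤ _ := by
        gcongr
        exact integral_abs_mul_le_sqrt_integral_sq_mul_integral_sq_div hnn hconv hwmeas hp'meas
          hint.1 hwp hfisher

lemma sq_one_add_abs_rpow_le (s x : ℝ) : (1 + |x| ^ s) ^ 2 ≤ 2 * (1 + |x| ^ (2 * s)) := by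
  rw [mul_comm 2 s, rpow_mul (abs_nonneg x), rpow_two]
  nlinarith [sq_nonneg (|x| ^ s - 1)]

section Moments

variable {μ : Measure ℝ} {p : ℝ → ℝ} {r s : ℝ}

lemma sq_one_add_abs_rpow_mul_le (hnn : ∀ x, 0 ≤ p x) (x : ℝ) :
    (1 + |x| ^ s) ^ 2 * p x ≤ 2 * (p x + |x| ^ (2 * s) * p x) := by
  linarith [mul_le_mul_of_nonneg_right (sq_one_add_abs_rpow_le s x) (hnn x)]

lemma integrable_sq_one_add_abs_rpow_mul (hnn : ∀ x, 0 ≤ p x) (hp : Integrable p μ)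
    (hmom : Integrable (fun x ↦ |x| ^ (2 * s) * p x) μ) :
    Integrable (fun x ↦ (1 + |x| ^ s) ^ 2 * p x) μ := by
  have hw : Measurable fun x : ℝ ↦ (1 + |x| ^ s) ^ 2 := by fun_prop
  refine ((hp.add hmom).const_mul 2).mono' (hw.aestronglyMeasurable.mul hp.1)
    (Eventually.of_forall fun x ↦ ?_)
  rw [norm_of_nonneg (mul_nonneg (sq_nonneg _) (hnn x))]
  exact sq_one_add_abs_rpow_mul_le hnn x

lemma integral_sq_one_add_abs_rpow_mul_le (hnn : ∀ x, 0 ≤ p x) (hp : Integrable p μ)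
    (hmom : Integrable (fun x ↦ |x| ^ (2 * s) * p x) μ) :
    ∫ x, (1 + |x| ^ s) ^ 2 * p x ∂μ ≤
      2 * ((∫ x, p x ∂μ) + ∫ x, |x| ^ (2 * s) * p x ∂μ) := by
  rw [← integral_add hp hmom, ← integral_const_mul]
  exact integral_mono (integrable_sq_one_add_abs_rpow_mul hnn hp hmom)
    ((hp.add hmom).const_mul 2) (sq_one_add_abs_rpow_mul_le hnn)

lemma sqrt_integral_sq_one_add_abs_rpow_mul_mul_le {c : ℝ} (hc : 0 ≤ c) (hnn : ∀ x, 0 ≤ p x)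
    (hp : Integrable p μ) (hmom : Integrable (fun x ↦ |x| ^ (2 * s) * p x) μ) :
    √((∫ x, (1 + |x| ^ s) ^ 2 * p x ∂μ) * c) ≤
      2 * √(((∫ x, p x ∂μ) + ∫ x, |x| ^ (2 * s) * p x ∂μ) * c) := by
  set B := (∫ x, p x ∂μ) + ∫ x, |x| ^ (2 * s) * p x ∂μ
  have hB0 : 0 ≤ B := add_nonneg (integral_nonneg hnn)
    (integral_nonneg fun x ↦ mul_nonneg (by positivity) (hnn x))
  calc √((∫ x, (1 + |x| ^ s) ^ 2 * p x ∂μ) * c) ≤ √(2 * B * c) := by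
        gcongr
        exact integral_sq_one_add_abs_rpow_mul_le hnn hp hmom
    _ ≤ √(2 ^ 2 * (B * c)) := sqrt_le_sqrt (by nlinarith [mul_nonneg hB0 hc])
    _ = 2 * √(B * c) := by rw [sqrt_mul (by positivity), sqrt_sq zero_le_two]

lemma abs_abs_rpow_mul_sign_mul_le (hs : 0 ≤ s) (hnn : ∀ x, 0 ≤ p x) (x : ℝ) :
    |s * |x| ^ r * SignType.sign x * p x| ≤ s * (|x| ^ r * p x) := by
  rw [abs_mul, abs_of_nonneg (hnn x), ← mul_assoc s]
  exact mul_le_mul_of_nonneg_right (abs_mul_abs_rpow_mul_sign_le hs r x) (hnn x)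

lemma integrable_abs_rpow_mul_sign_mul (hs : 0 ≤ s) (hnn : ∀ x, 0 ≤ p x)
    (hp : AEStronglyMeasurable p μ) (hmom : Integrable (fun x ↦ |x| ^ r * p x) μ) :
    Integrable (fun x ↦ s * |x| ^ r * SignType.sign x * p x) μ := by
  have hw : Measurable fun x : ℝ ↦ s * |x| ^ r * SignType.sign x :=
    Measurable.mul (by fun_prop) measurable_sign_coe
  exact (hmom.const_mul s).mono' (hw.aestronglyMeasurable.mul hp)
    (Eventually.of_forall (abs_abs_rpow_mul_sign_mul_le hs hnn))

lemma integral_abs_abs_rpow_mul_sign_mul_le (hs : 0 ≤ s) (hnn : ∀ x, 0 ≤ p x)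
    (hmom : Integrable (fun x ↦ |x| ^ r * p x) μ) :
    ∫ x, |s * |x| ^ r * SignType.sign x * p x| ∂μ ≤ s * ∫ x, |x| ^ r * p x ∂μ := by
  rw [← integral_const_mul]
  exact integral_mono_of_nonneg (Eventually.of_forall fun _ ↦ abs_nonneg _)
    (hmom.const_mul s) (Eventually.of_forall (abs_abs_rpow_mul_sign_mul_le hs hnn))

end Moments

lemma support_sq_div_subset {α : Type*} {p q : α → ℝ} (hnn : ∀ x, 0 ≤ p x) :
    Function.support (fun x ↦ q x ^ 2 / p x) ⊆ {x | 0 < p x} := fun x hx ↦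
  (hnn x).lt_of_ne' (div_ne_zero_iff.1 hx).2

theorem density_decay_bound_general
    (p p' : ℝ → ℝ) (s I C : ℝ) (hs : 0 < s)
    (hnn : ∀ x, 0 ≤ p x) (hint : Integrable p)
    (hFTC : ∀ a b : ℝ, p b - p a = ∫ x in a..b, p' x)
    (hconv : ∀ x, p x = 0 → p' x = 0)
    (hIfin : IntegrableOn (fun x ↦ p' x ^ 2 / p x) {x | 0 < p x})
    (hI : I = ∫ x in {x | 0 < p x}, p' x ^ 2 / p x)
    (hmom1 : Integrable (fun x ↦ |x| ^ (s - 1) * p x))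
    (hmom2 : Integrable (fun x ↦ |x| ^ (2 * s) * p x))
    (hC : C = s * (∫ x, |x| ^ (s - 1) * p x) +
      √(((∫ x, p x) + ∫ x, |x| ^ (2 * s) * p x) * I)) :
    (∀ x, p x ≤ C / (1 + |x| ^ s)) ∧
      Tendsto (fun x ↦ (1 + |x| ^ s) * p x) (cocompact ℝ) (𝓝 0) := by
  have hsupp := support_sq_div_subset (q := p') hnn
  rw [setIntegral_eq_integral_of_forall_compl_eq_zero fun x hx ↦
    Function.notMem_support.1 fun h ↦ hx (hsupp h)] at hI
  have hp : IsIndefiniteIntegral p p' := .of_forall_sub_eq_integral hint hconv hFTC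
  obtain ⟨hbound, hlim⟩ := hp.two_mul_abs_mul_le_and_tendsto_cocompact
      ((isIndefiniteIntegral_abs_rpow hs).const_add 1) hnn hint hconv
      ((integrableOn_iff_integrable_of_support_subset hsupp).1 hIfin)
      (integrable_abs_rpow_mul_sign_mul hs.le hnn hint.1 hmom1)
      (integrable_sq_one_add_abs_rpow_mul hnn hint hmom2)
  have hI_nonneg : 0 ≤ I := hI ▸ integral_nonneg fun x ↦ div_nonneg (sq_nonneg _) (hnn x)
  have hmom1_nonneg : 0 ≤ s * ∫ x, |x| ^ (s - 1) * p x :=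
    mul_nonneg hs.le (integral_nonneg fun x ↦ mul_nonneg (by positivity) (hnn x))
  have hweight := integral_abs_abs_rpow_mul_sign_mul_le hs.le hnn hmom1
  have hfisher := sqrt_integral_sq_one_add_abs_rpow_mul_mul_le hI_nonneg hnn hint hmom2
  refine ⟨fun x ↦ ?_, hlim⟩
  rw [le_div_iff₀ (by positivity), mul_comm]
  linarith [hI ▸ hbound x, le_abs_self ((1 + |x| ^ s) * p x)]

/-- If `X` has density `p` with Fisher information `I` and absolute moments
`β_r = ∫ |x|^r p(x) dx`, then for `s ≥ 1` and all `x`, `p(x) ≤ C / (1 + |x|^s)` with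
`C = s β_{s-1} + √((1 + β_{2s}) I)`; moreover `(1 + |x|^s) p(x) → 0` as `|x| → ∞`. -/
theorem density_decay_bound
    (p p' : ℝ → ℝ) (s I C : ℝ) (hs : 1 ≤ s)
    (hnn : ∀ x, 0 ≤ p x) (hint : Integrable p) (h1 : ∫ x, p x = 1)
    (hFTC : ∀ a b : ℝ, p b - p a = ∫ x in a..b, p' x)
    (hconv : ∀ x, p x = 0 → p' x = 0)
    (hIfin : IntegrableOn (fun x => (p' x) ^ 2 / p x) {x | 0 < p x})
    (hI : I = ∫ x in {x | 0 < p x}, (p' x) ^ 2 / p x)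
    (hmom1 : Integrable (fun x => |x| ^ (s - 1) * p x))
    (hmom2 : Integrable (fun x => |x| ^ (2 * s) * p x))
    (hC : C = s * (∫ x, |x| ^ (s - 1) * p x) +
      Real.sqrt ((1 + ∫ x, |x| ^ (2 * s) * p x) * I)) :
    (∀ x, p x ≤ C / (1 + |x| ^ s)) ∧
      Tendsto (fun x => (1 + |x| ^ s) * p x) (cocompact ℝ) (nhds 0) := by
  exact density_decay_bound_general p p' s I C (by linarith) hnn hint hFTC hconv hIfin hI hmom1
    hmom2 (by rw [hC, h1])
end
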